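/- Let m, W ≥ 1, d ≥ 2 and widths w_1, ..., w_{d-1} ≥ 1. Consider an LTF-of-(ReLU)^{d-1} circuit on inputs (x, y) ∈ {-1,1}^m × {-1,1}^m: layers 1 through d-1 are ReLU layers as follows — h^{(1)}_j(x,y) = max(0, ⟨a¹_j, x⟩ + ⟨a²_j, y⟩ + b_j) for j = 1,...,w_1, and h^{(i)}_j = max(0, b^{(i)}_j + Σ_{l=1}^{w_{i-1}} A^{(i)}_{jl} h^{(i-1)}_l) for 2 ≤ i ≤ d-1 — and the output is f(x,y) = 1 if β + Σ_{j=1}^{w_{d-1}} α_j h^{(d-1)}_j(x,y) ≥ 0 and f(x,y) = -1 otherwise. Assume the bottom-layer weights are restricted: all entries of a¹_j, a²_j and b_j are integers of absolute value at most W, and there is a linear order on {-1,1}^m such that for every j both x ↦ ⟨a¹_j, x⟩ and y ↦ ⟨a²_j, y⟩ are nondecreasing with respect to that order. Then the sign-rank of the 2^m × 2^m matrix [f(x,y)] is at most 1 + (Π_{k=1}^{d-1} w_k)² · (2mW + 1)². -/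

import Mathlib

/-!
Row `x` of the matrix `[f(x, y)]` depends on `x` only through the integers `⟨a¹_j, x⟩`, one for each
bottom gate. These tuples form a chain in the product order, because all the forms increase along
one common order of the cube. The sum of the coordinates is strictly monotone, so on a chain it
determines the whole tuple. It is an integer of absolute value at most `N = ∑ j, ∑ i, |a¹_{ji}|`, so
the matrix has at most `2 * N + 1` distinct rows. This bounds its rank, and the matrix is its own
sign representative.
-/

/-- The ±1 real encoding of a Boolean vector. -/
def pmEnc {n : ℕ} (x : Fin n → Bool) : Fin n → ℝ := fun i => if x i then 1 else -1

/-- The sign-rank of a `±1` matrix `A`: the least rank of a real matrix whose entries all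
have the same strict sign as the corresponding entries of `A`. -/
noncomputable def signRank {ι κ : Type*} [Fintype ι] [Fintype κ]
    (A : Matrix ι κ ℝ) : ℕ :=
  sInf {r : ℕ | ∃ B : Matrix ι κ ℝ, (∀ s t, 0 < A s t * B s t) ∧ B.rank = r}

theorem signRank_le_rank {ι κ : Type*} [Fintype ι] [Fintype κ] {A : Matrix ι κ ℝ}
    (hA : ∀ s t, A s t ≠ 0) : signRank A ≤ A.rank :=
  Nat.sInf_le ⟨A, fun s t => mul_self_pos.2 (hA s t), rfl⟩

theorem rank_le_card_of_row_factorsThrough {ι κ K τ : Type*} [Finite ι] [Fintype κ] [Field K]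
    {M : Matrix ι κ K} {T : ι → τ} {S : Finset τ} (hS : ∀ x, T x ∈ S)
    (hM : M.row.FactorsThrough T) : M.rank ≤ S.card := by
  classical
  have hrange : Set.range M.row ⊆ S.image (Function.extend T M.row 0) := by
    rintro _ ⟨x, rfl⟩
    exact Finset.mem_image.2 ⟨T x, hS x, hM.extend_apply 0 x⟩
  calc M.rank = Module.finrank K (Submodule.span K (Set.range M.row)) :=
        M.rank_eq_finrank_span_row
    _ ≤ Module.finrank K (Submodule.span K (S.image (Function.extend T M.row 0) : Set (κ → K))) :=
        Submodule.finrank_mono (Submodule.span_mono hrange)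
    _ ≤ (S.image (Function.extend T M.row 0)).card := finrank_span_finset_le_card _
    _ ≤ S.card := Finset.card_image_le

theorem factorsThrough_sum_of_isChain {ι J R : Type*} [Fintype J] [AddCommMonoid R]
    [PartialOrder R] [IsOrderedCancelAddMonoid R] {u : ι → J → R}
    (hu : IsChain (· ≤ ·) (Set.range u)) : u.FactorsThrough fun x => ∑ j, u x j := by
  intro x x' hsum
  rcases hu.total (Set.mem_range_self x) (Set.mem_range_self x') with hle | hle
  · exact hle.eq_of_not_lt fun hlt => (Fintype.sum_strictMono hlt).ne hsum
  · exact (hle.eq_of_not_lt fun hlt => (Fintype.sum_strictMono hlt).ne' hsum).symm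

theorem factorsThrough_zero_of_factorsThrough_succ {Z : Type*} {X : ℕ → Type*} {H : ∀ i, Z → X i}
    {n : ℕ} (hH : ∀ i < n, (H (i + 1)).FactorsThrough (H i)) : (H n).FactorsThrough (H 0) := by
  induction n with
  | zero => exact fun _ _ hz => hz
  | succ n ih => exact fun _ _ hz => hH n n.lt_succ_self (ih (fun i hi => hH i (by omega)) hz)

/-- The linear form `⟨a, x⟩` on the `±1` cube for integer weights `a`, kept in `ℤ` so that its
values can be counted. -/
def signForm {m : ℕ} (a : Fin m → ℤ) (x : Fin m → Bool) : ℤ :=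
  ∑ i, a i * if x i then 1 else -1

theorem cast_signForm {m : ℕ} (a : Fin m → ℤ) (x : Fin m → Bool) :
    (signForm a x : ℝ) = ∑ i, (a i : ℝ) * pmEnc x i := by
  simp [signForm, pmEnc]

theorem natAbs_signForm_le {m : ℕ} (a : Fin m → ℤ) (x : Fin m → Bool) :
    (signForm a x).natAbs ≤ ∑ i, (a i).natAbs :=
  (Int.natAbs_sum_le _ _).trans <| Finset.sum_le_sum fun i _ => by
    split_ifs <;> simp

theorem isChain_range_signForm {m : ℕ} {J ι : Type*} [LinearOrder ι] {a : J → Fin m → ℤ}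
    {ρ : ι → Fin m → Bool} (hρ : ρ.Surjective)
    (hmono : ∀ j, Monotone fun s => ∑ i, (a j i : ℝ) * pmEnc (ρ s) i) :
    IsChain (· ≤ ·) (Set.range fun x j => signForm (a j) x) := by
  rw [← hρ.range_comp]
  refine Monotone.isChain_range fun s t hst j => ?_
  have hle := hmono j hst
  simp only [← cast_signForm] at hle
  exact Int.cast_le.1 hle

theorem signRank_le_of_row_factorsThrough_signForm {m : ℕ} {J κ : Type*} [Fintype J] [Fintype κ]
    {a : J → Fin m → ℤ} {M : Matrix (Fin m → Bool) κ ℝ} (hM : ∀ x y, M x y ≠ 0)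
    (hchain : IsChain (· ≤ ·) (Set.range fun x j => signForm (a j) x))
    (hrow : M.row.FactorsThrough fun x j => signForm (a j) x) :
    signRank M ≤ 1 + 2 * ∑ j, ∑ i, (a j i).natAbs := by
  set N := ∑ j, ∑ i, (a j i).natAbs
  have hsum : ∀ x, ∑ j, signForm (a j) x ∈ Finset.Icc (-N : ℤ) N := fun x => by
    have hN : (∑ j, signForm (a j) x).natAbs ≤ N :=
      (Int.natAbs_sum_le _ _).trans (Finset.sum_le_sum fun j _ => natAbs_signForm_le (a j) x)
    rw [Finset.mem_Icc]
    omega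
  calc signRank M ≤ M.rank := signRank_le_rank hM
    _ ≤ (Finset.Icc (-N : ℤ) N).card :=
        rank_le_card_of_row_factorsThrough hsum fun _ _ hT =>
          hrow (factorsThrough_sum_of_isChain hchain hT)
    _ = 1 + 2 * N := by
        rw [Int.card_Icc]
        omega

theorem ltf_of_relu_signRank_upper_bound_general {m n : ℕ} {ι κ : Type*} [LinearOrder ι]
    [Fintype κ] {v : ℕ → ℕ} {a : Fin (v 0) → Fin m → ℤ} {ρ : ι → Fin m → Bool}
    (hρ : ρ.Surjective) (hmono : ∀ j, Monotone fun s => ∑ i, (a j i : ℝ) * pmEnc (ρ s) i)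
    (σ : ℝ → ℝ) (g : Fin (v 0) → κ → ℝ)
    (A : (i : ℕ) → Fin (v (i + 1)) → Fin (v i) → ℝ) (b : (i : ℕ) → Fin (v (i + 1)) → ℝ)
    (α : Fin (v n) → ℝ) (β : ℝ)
    (h : (i : ℕ) → Fin (v i) → (Fin m → Bool) → κ → ℝ)
    (hbase : ∀ j x y, h 0 j x y = σ ((∑ i, (a j i : ℝ) * pmEnc x i) + g j y))
    (hstep : ∀ i < n, ∀ j x y, h (i + 1) j x y = σ (b i j + ∑ l, A i j l * h i l x y)) :
    signRank (Matrix.of fun (x : Fin m → Bool) (y : κ) =>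
        if 0 ≤ β + ∑ j, α j * h n j x y then (1 : ℝ) else -1) ≤
      1 + 2 * ∑ j, ∑ i, (a j i).natAbs := by
  refine signRank_le_of_row_factorsThrough_signForm (fun x y => ?_)
    (isChain_range_signForm hρ hmono) fun x x' hforms => ?_
  · rw [Matrix.of_apply]
    split_ifs <;> norm_num
  have hbottom : (fun j => h 0 j x) = fun j => h 0 j x' := by
    funext j y
    have hform : signForm (a j) x = signForm (a j) x' := congrFun hforms j
    rw [hbase, hbase, ← cast_signForm, ← cast_signForm, hform]
  have hlayers : ∀ i < n, (fun z j => h (i + 1) j z).FactorsThrough fun z j => h i j z := by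
    intro i hi z z' hz
    funext j y
    simp only [hstep i hi, fun l => congrFun hz l]
  have htop : (fun j => h n j x) = fun j => h n j x' :=
    factorsThrough_zero_of_factorsThrough_succ (H := fun i z j => h i j z) hlayers hbottom
  funext y
  simp only [Matrix.row, Matrix.of_apply, fun j => congrFun htop j]

theorem one_add_two_mul_sum_natAbs_le {w m W P : ℕ} {a : Fin w → Fin m → ℤ}
    (ha : ∀ j i, |a j i| ≤ (W : ℤ)) (hw : w ≤ P) :
    1 + 2 * ∑ j, ∑ i, (a j i).natAbs ≤ 1 + P ^ 2 * (2 * m * W + 1) ^ 2 := by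
  have hsum : ∑ j, ∑ i, (a j i).natAbs ≤ ∑ _j : Fin w, ∑ _i : Fin m, W := by
    gcongr with j _ i
    exact_mod_cast (Int.natCast_natAbs (a j i)).trans_le (ha j i)
  calc 1 + 2 * ∑ j, ∑ i, (a j i).natAbs ≤ 1 + 2 * (w * (m * W)) := by
        gcongr
        simpa using hsum
    _ = 1 + w * (2 * m * W) := by ring
    _ ≤ 1 + P ^ 2 * (2 * m * W + 1) ^ 2 := by
        gcongr
        · exact hw.trans (Nat.le_self_pow two_ne_zero P)
        · exact (Nat.le_succ _).trans (Nat.le_self_pow two_ne_zero _)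

/-- the sign-rank of an LTF-of-(ReLU)^{d-1} circuit (hidden ReLU layers
`0, …, d-2` of widths `v 0, …, v (d-2)`, output LTF gate) whose bottom-layer weights are
integers of magnitude at most `W` ordering the hypercube monotonically along a common
linear order is at most `1 + (Π_k v k)² (2mW+1)²`. -/
theorem ltf_of_relu_signRank_upper_bound (m W d : ℕ) (hm : 1 ≤ m) (hW : 1 ≤ W)
    (hd : 2 ≤ d)
    (v : ℕ → ℕ) (hv : ∀ i < d - 1, 1 ≤ v i)
    (a₁ a₂ : Fin (v 0) → Fin m → ℤ) (b : Fin (v 0) → ℤ)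
    (ha₁ : ∀ j i, |a₁ j i| ≤ (W : ℤ)) (ha₂ : ∀ j i, |a₂ j i| ≤ (W : ℤ))
    (hb : ∀ j, |b j| ≤ (W : ℤ))
    (horder : ∃ ρ : Fin (2 ^ m) ≃ (Fin m → Bool), ∀ j : Fin (v 0),
      Monotone (fun s => ∑ i, (a₁ j i : ℝ) * pmEnc (ρ s) i) ∧
      Monotone (fun s => ∑ i, (a₂ j i : ℝ) * pmEnc (ρ s) i))
    (A : (i : ℕ) → Fin (v (i + 1)) → Fin (v i) → ℝ)
    (bw : (i : ℕ) → Fin (v (i + 1)) → ℝ)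
    (α : Fin (v (d - 2)) → ℝ) (β : ℝ)
    (h : (i : ℕ) → Fin (v i) → (Fin m → Bool) → (Fin m → Bool) → ℝ)
    (hbase : ∀ j x y, h 0 j x y =
      max 0 ((∑ i, (a₁ j i : ℝ) * pmEnc x i) + (∑ i, (a₂ j i : ℝ) * pmEnc y i) + (b j : ℝ)))
    (hstep : ∀ i, i + 1 < d - 1 → ∀ (j : Fin (v (i + 1))) x y,
      h (i + 1) j x y = max 0 (bw i j + ∑ l, A i j l * h i l x y)) :
    signRank (Matrix.of fun x y : Fin m → Bool =>
        if 0 ≤ β + ∑ j, α j * h (d - 2) j x y then (1 : ℝ) else -1) ≤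
      1 + (∏ i ∈ Finset.range (d - 1), v i) ^ 2 * (2 * m * W + 1) ^ 2 := by
  obtain ⟨ρ, hρ⟩ := horder
  have hwidth : v 0 ≤ ∏ i ∈ Finset.range (d - 1), v i :=
    Finset.single_le_prod' (f := v) (fun i hi => hv i (Finset.mem_range.1 hi))
      (Finset.mem_range.2 (by omega))
  exact (ltf_of_relu_signRank_upper_bound_general ρ.surjective (fun j => (hρ j).1) (max 0)
    (fun j y => (∑ i, (a₂ j i : ℝ) * pmEnc y i) + b j) A bw α β h
    (fun j x y => by rw [hbase, add_assoc]) fun i hi => hstep i (by omega)).trans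
    (one_add_two_mul_sum_natAbs_le ha₁ hwidth)
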